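/- Let 0<r<1, α>0 and β∈ℝ. Then for every integer n ≥ n₀(α,r,2) one has E_n(C^{α,r}_{β,2})_C = (e^{-α n^r}/√(2παr)) · n^{(1-r)/2} · (1 + γ_n · ( (1/(2αr)) n^{-r} + αr · n^{-(1-r)} )), where the quantity γ_n = γ_n(α,r) satisfies |γ_n| ≤ √(54π³/(54π³−1)). -/

import Mathlib

open MeasureTheory Real Filter
open scoped ENNReal

/-- The generalized Poisson kernel `P_{α,r,β}(t) = Σ_{k=1}^∞ e^{-α k^r} cos(kt − βπ/2)`. -/
noncomputable def genPoissonKernel (α r β : ℝ) (t : ℝ) : ℝ :=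
  ∑' k : ℕ, Real.exp (-α * ((k : ℝ) + 1) ^ r) * Real.cos (((k : ℝ) + 1) * t - β * π / 2)

/-- Fourier cosine coefficient `a_k = (1/π)∫_{-π}^{π} f(t) cos(kt) dt`. -/
noncomputable def fourierCoefA (f : ℝ → ℝ) (k : ℕ) : ℝ :=
  (1 / π) * ∫ t in (-π)..π, f t * Real.cos (k * t)

/-- Fourier sine coefficient `b_k = (1/π)∫_{-π}^{π} f(t) sin(kt) dt`. -/
noncomputable def fourierCoefB (f : ℝ → ℝ) (k : ℕ) : ℝ :=
  (1 / π) * ∫ t in (-π)..π, f t * Real.sin (k * t)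

/-- Partial Fourier sum of order `m` of `f`. -/
noncomputable def fourierSum (m : ℕ) (f : ℝ → ℝ) (x : ℝ) : ℝ :=
  fourierCoefA f 0 / 2 +
    ∑ k ∈ Finset.Icc 1 m, (fourierCoefA f k * Real.cos (k * x) + fourierCoefB f k * Real.sin (k * x))

/-- The class `C^{α,r}_{β,p}` of generalized Poisson integrals. -/
def poissonClass (α r β : ℝ) (p : ℝ≥0∞) : Set (ℝ → ℝ) :=
  {f | (∀ x, f (x + 2 * π) = f x) ∧ ∃ a₀ : ℝ, ∃ φ : ℝ → ℝ,
    (∀ x, φ (x + 2 * π) = φ x) ∧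
    eLpNorm φ p (volume.restrict (Set.Ioc (0 : ℝ) (2 * π))) ≤ 1 ∧
    (∫ t in (0 : ℝ)..(2 * π), φ t) = 0 ∧
    ∀ x, f x = a₀ / 2 + (1 / π) * ∫ t in (-π)..π, genPoissonKernel α r β (x - t) * φ t}

/-- `E_n(C^{α,r}_{β,p})_C`: uniform deviation of Fourier sums of order `n-1` on the class. -/
noncomputable def EnC (α r β : ℝ) (p : ℝ≥0∞) (n : ℕ) : ℝ :=
  ⨆ f ∈ poissonClass α r β p, ⨆ x : ℝ, |f x - fourierSum (n - 1) f x|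

/-- `n₀(α,r,2)`: the smallest positive integer `n` with
`(1/(αr)) n^{-r} + 2αr n^{-(1-r)} ≤ (1/(3π)³)·(1/2)`. -/
noncomputable def n₀two (α r : ℝ) : ℕ :=
  sInf {n : ℕ | 0 < n ∧
    1 / (α * r) * (n : ℝ) ^ (-r) + 2 * α * r * (n : ℝ) ^ (-(1 - r)) ≤
      (1 / (3 * π) ^ 3) * (1 / 2)}

def MomB (A : ℝ) (a : ℕ → ℂ) : Prop :=
  ∀ (N : ℕ) (p : ℕ → ℂ) (B : ℝ),
    (∀ s ∈ Set.Icc (0:ℝ) 1, ‖∑ k ∈ Finset.range N, p k * (s:ℂ) ^ k‖ ≤ B) →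
    ‖∑ k ∈ Finset.range N, p k * a k‖ ≤ A * B

lemma MomB.pt {s : ℝ} (hs : s ∈ Set.Icc (0:ℝ) 1) : MomB 1 (fun k => (s:ℂ) ^ k) := by
  intro N p B h
  simpa using h s hs

lemma MomB.one : MomB 1 (fun _ => 1) := by
  simpa using MomB.pt (s := 1) (by simp)

lemma MomB.mul {A B : ℝ} {a b : ℕ → ℂ} (ha : MomB A a) (hb : MomB B b) :
    MomB (A * B) (fun k => a k * b k) := by
  intro N p C h
  have := ha N (fun k => p k * b k) (B * C) (by
    intro s hs
    have := hb N (fun k => p k * (s:ℂ) ^ k) C (by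
      intro s' hs'
      have := h (s * s') ⟨mul_nonneg hs.1 hs'.1, mul_le_one₀ hs.2 hs'.1 hs'.2⟩
      simpa [mul_pow, mul_assoc] using this)
    convert this using 3
    ring)
  convert this using 1
  · congr 1
    refine Finset.sum_congr rfl fun k _ => by ring
  · ring

lemma MomB.add {A B : ℝ} {a b : ℕ → ℂ} (ha : MomB A a) (hb : MomB B b) :
    MomB (A + B) (fun k => a k + b k) := by
  intro N p C h
  have h1 := ha N p C h
  have h2 := hb N p C h
  simp only [mul_add, Finset.sum_add_distrib]
  refine (norm_add_le _ _).trans ?_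
  linarith

lemma MomB.smul {A c : ℝ} {a : ℕ → ℂ} (hc : 0 ≤ c) (ha : MomB A a) :
    MomB (c * A) (fun k => (c:ℂ) * a k) := by
  intro N p C h
  have h1 := ha N p C h
  have : ∑ k ∈ Finset.range N, p k * ((c:ℂ) * a k) = c * ∑ k ∈ Finset.range N, p k * a k := by
    rw [Finset.mul_sum]
    refine Finset.sum_congr rfl fun k _ => by ring
  rw [this, norm_mul, Complex.norm_real, Real.norm_of_nonneg hc, mul_assoc]
  exact mul_le_mul_of_nonneg_left h1 hc

lemma MomB.zero : MomB 0 (fun _ => 0) := by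
  intro N p C h
  simp

lemma MomB.pow {A : ℝ} {a : ℕ → ℂ} (ha : MomB A a) (j : ℕ) :
    MomB (A ^ j) (fun k => a k ^ j) := by
  induction j with
  | zero => simpa using MomB.one
  | succ j ih => simpa [pow_succ] using ih.mul ha

lemma MomB.lim {A : ℕ → ℝ} {A' : ℝ} {a : ℕ → ℕ → ℂ} {a' : ℕ → ℂ} (ha : ∀ n, MomB (A n) (a n))
    (hA : Tendsto A atTop (nhds A')) (h : ∀ k, Tendsto (fun n => a n k) atTop (nhds (a' k))) :
    MomB A' a' := by
  intro N p C hC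
  refine le_of_tendsto_of_tendsto' (f := fun n => ‖∑ k ∈ Finset.range N, p k * a n k‖)
    (g := fun n => A n * C) (b := atTop) ?_ (hA.mul_const C) (fun n => ha n N p C hC)
  refine Tendsto.norm ?_
  exact tendsto_finsetSum _ fun k _ => (h k).const_mul _

lemma MomB.exp {A : ℝ} {a : ℕ → ℂ} (ha : MomB A a) :
    MomB (Real.exp A) (fun k => Complex.exp (a k)) := by
  have key : ∀ n : ℕ, MomB (∑ j ∈ Finset.range n, A ^ j / (j.factorial))
      (fun k => ∑ j ∈ Finset.range n, (a k) ^ j / (j.factorial)) := by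
    intro n
    induction n with
    | zero => simpa using MomB.zero
    | succ n ih =>
      simp only [Finset.sum_range_succ]
      refine ih.add ?_
      have := (ha.pow n).smul (c := ((n.factorial : ℝ))⁻¹) (by positivity)
      convert this using 1
      · ring
      · funext k; push_cast; ring
  refine MomB.lim key ?_ ?_
  · have := NormedSpace.expSeries_div_hasSum_exp (𝔸 := ℝ) A
    rw [← Real.exp_eq_exp_ℝ] at this
    exact this.tendsto_sum_nat
  · intro k
    have := NormedSpace.expSeries_div_hasSum_exp (𝔸 := ℂ) (a k)
    rw [← Complex.exp_eq_exp_ℂ] at this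
    exact this.tendsto_sum_nat

lemma MomB.mix {T : ℝ} {w : ℝ → ℝ} {F : ℝ → ℕ → ℂ} (hw : ∀ t ∈ Set.Ioc 0 T, 0 ≤ w t)
    (hwi : IntegrableOn w (Set.Ioc 0 T)) (hF : ∀ t ∈ Set.Ioc 0 T, MomB 1 (F t))
    (hi : ∀ k, IntegrableOn (fun t => (w t : ℂ) * F t k) (Set.Ioc 0 T)) :
    MomB (∫ t in Set.Ioc 0 T, w t) (fun k => ∫ t in Set.Ioc 0 T, (w t : ℂ) * F t k) := by
  intro N p B h
  have e : ∑ k ∈ Finset.range N, p k * ∫ t in Set.Ioc 0 T, (w t : ℂ) * F t k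
      = ∫ t in Set.Ioc 0 T, ∑ k ∈ Finset.range N, p k * ((w t : ℂ) * F t k) := by
    rw [integral_finsetSum]
    · simp_rw [integral_const_mul]
    · intro k _
      exact (hi k).const_mul _
  rw [e, ← integral_mul_const]
  refine norm_integral_le_of_norm_le (hwi.mul_const B) ?_
  refine (ae_restrict_iff' measurableSet_Ioc).2 (Eventually.of_forall fun t ht => ?_)
  have h1 := (hF t ht).smul (hw t ht) N p B h
  simpa using h1

lemma MomB.rat {t : ℝ} (ht : 0 < t) : MomB 1 (fun k => ((t / (t + k) : ℝ) : ℂ)) := by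
  have ii : ∀ k : ℕ, IntervalIntegrable (fun s : ℝ => t * s ^ (t - 1 + k)) volume 0 1 := fun k =>
    (intervalIntegral.intervalIntegrable_rpow' (by have : (0:ℝ) ≤ k := k.cast_nonneg
                                                   linarith)).const_mul _
  have ev : ∀ k : ℕ, ∫ s in Set.Ioc (0:ℝ) 1, t * s ^ (t - 1 + k) = t / (t + k) := by
    intro k
    have : (0:ℝ) ≤ k := k.cast_nonneg
    rw [← intervalIntegral.integral_of_le zero_le_one, intervalIntegral.integral_const_mul,
      integral_rpow (Or.inl (by linarith)), Real.zero_rpow (by linarith), Real.one_rpow]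
    rw [show t - 1 + k + 1 = t + k by ring]
    ring
  have eq : ∀ k : ℕ, ∀ s ∈ Set.Ioc (0:ℝ) 1,
      ((t * s ^ (t - 1 + k) : ℝ) : ℂ) = ((t * s ^ (t - 1) : ℝ) : ℂ) * (s : ℂ) ^ k := by
    intro k s hs
    rw [Real.rpow_add hs.1, Real.rpow_natCast]
    push_cast; ring
  have := MomB.mix (T := 1) (w := fun s => t * s ^ (t - 1)) (F := fun s k => (s:ℂ) ^ k)
    (fun s hs => by have := hs.1; positivity)
    (by have := (ii 0).1; simpa using this)
    (fun s hs => MomB.pt ⟨hs.1.le, hs.2⟩)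
    (fun k => by
      refine IntegrableOn.congr_fun (f := fun s => ((t * s ^ (t - 1 + k) : ℝ) : ℂ)) ?_ (eq k)
        measurableSet_Ioc
      exact (ii k).1.ofReal)
  have e0 := ev 0
  simp only [Nat.cast_zero, add_zero, div_self ht.ne'] at e0
  rw [e0] at this
  convert this using 1
  funext k
  rw [← ev k, ← integral_complex_ofReal]
  exact setIntegral_congr_fun measurableSet_Ioc (eq k)

lemma momB_main {α r : ℝ} (hα : 0 < α) (hr0 : 0 < r) (hr1 : r < 1) :
    MomB 1 (fun k => ((Real.exp (-α * (k:ℝ) ^ r) : ℝ) : ℂ)) := by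
  have hp : r ∈ Set.Ioo (0:ℝ) 1 := ⟨hr0, hr1⟩
  set I := ∫ t in Set.Ioi 0, rpowIntegrand₀₁ r t 1 with hI
  have hIp : 0 < I := integral_rpowIntegrand₀₁_one_pos hp
  set c := α * I⁻¹ with hc
  have hcp : 0 < c := by positivity
  have wi : ∀ T : ℝ, 0 ≤ T → IntegrableOn (fun t : ℝ => t ^ (r - 1)) (Set.Ioc 0 T) := fun T hT =>
    (intervalIntegral.intervalIntegrable_rpow' (a := 0) (b := T) (by linarith)).1
  have fi : ∀ T : ℝ, 0 ≤ T → ∀ k : ℕ,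
      IntegrableOn (fun t : ℝ => t ^ (r - 1) * (t / (t + k))) (Set.Ioc 0 T) := by
    intro T hT k
    refine Integrable.mono' (wi T hT) ?_ ?_
    · apply Measurable.aestronglyMeasurable
      fun_prop
    · refine (ae_restrict_iff' measurableSet_Ioc).2 (Eventually.of_forall fun t ht => ?_)
      have h0 : 0 < t := ht.1
      have hk : (0:ℝ) ≤ k := k.cast_nonneg
      rw [Real.norm_of_nonneg (by positivity)]
      refine mul_le_of_le_one_right (by positivity) ?_
      rw [div_le_one (by positivity)]; linarith
  have mb : ∀ n : ℕ, MomB (∫ t in Set.Ioc (0:ℝ) n, t ^ (r - 1))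
      (fun k => ((∫ t in Set.Ioc (0:ℝ) n, t ^ (r - 1) * (t / (t + k)) : ℝ) : ℂ)) := by
    intro n
    have := MomB.mix (T := n) (w := fun t => t ^ (r - 1))
      (F := fun t k => ((t / (t + k) : ℝ) : ℂ))
      (fun t ht => by have := ht.1; positivity) (wi n n.cast_nonneg)
      (fun t ht => MomB.rat ht.1)
      (fun k => by
        have := (fi n n.cast_nonneg k).ofReal (𝕜 := ℂ)
        simpa [IntegrableOn] using this)
    convert this using 1
    funext k
    rw [← integral_complex_ofReal]
    congr 1
    funext t; push_cast; ring
  have key := fun n => ((mb n).smul hcp.le).exp.smul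
    (Real.exp_pos (-(c * ∫ t in Set.Ioc (0:ℝ) n, t ^ (r - 1)))).le
  refine MomB.lim (A' := 1) key ?_ ?_
  · have : ∀ n : ℕ, Real.exp (-(c * ∫ t in Set.Ioc (0:ℝ) n, t ^ (r - 1))) *
        Real.exp (c * ∫ t in Set.Ioc (0:ℝ) n, t ^ (r - 1)) = 1 := by
      intro n; rw [← Real.exp_add]; simp
    simp only [this]; exact tendsto_const_nhds
  · intro k
    have hk : (0:ℝ) ≤ k := k.cast_nonneg
    have e : ∀ n : ℕ, ((Real.exp (-(c * ∫ t in Set.Ioc (0:ℝ) n, t ^ (r - 1))) : ℝ) : ℂ) *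
        Complex.exp (c * ((∫ t in Set.Ioc (0:ℝ) n, t ^ (r - 1) * (t / (t + k)) : ℝ) : ℂ)) =
        ((Real.exp (-(c * ∫ t in (0:ℝ)..n, rpowIntegrand₀₁ r t k)) : ℝ) : ℂ) := by
      intro n
      rw [← Complex.ofReal_mul, ← Complex.ofReal_exp, ← Complex.ofReal_mul, ← Real.exp_add]
      congr 2
      rw [intervalIntegral.integral_of_le n.cast_nonneg]
      have : ∫ t in Set.Ioc (0:ℝ) n, rpowIntegrand₀₁ r t k =
          ∫ t in Set.Ioc (0:ℝ) n, (t ^ (r - 1) - t ^ (r - 1) * (t / (t + k))) := by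
        refine setIntegral_congr_fun measurableSet_Ioc fun t ht => ?_
        have h0 : 0 < t := ht.1
        simp only [rpowIntegrand₀₁]
        rw [Real.rpow_sub_one h0.ne']
        have : t + k ≠ 0 := by positivity
        field_simp
      rw [this, integral_sub (wi n n.cast_nonneg) (fi n n.cast_nonneg k)]
      ring
    simp only [e]
    refine (Complex.continuous_ofReal.tendsto _).comp ((Real.continuous_exp.tendsto _).comp ?_)
    have l := intervalIntegral_tendsto_integral_Ioi (0:ℝ)
      (integrableOn_rpowIntegrand₀₁_Ioi hp hk) tendsto_natCast_atTop_atTop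
    have l2 := (l.const_mul c).neg
    convert l2 using 2
    rw [rpow_eq_const_mul_integral hp hk, ← hI, hc]
    ring

noncomputable def idX : C(unitInterval, ℂ) := ⟨fun s => ((s:ℝ):ℂ), by fun_prop⟩

lemma norm_idX_le : ‖idX‖ ≤ 1 := by
  rw [ContinuousMap.norm_le _ zero_le_one]
  intro s
  have : ‖((s:ℝ):ℂ)‖ ≤ 1 := by
    rw [Complex.norm_real, Real.norm_of_nonneg s.2.1]; exact s.2.2
  exact this

lemma exists_functional_gen {E : Type*} [NormedAddCommGroup E] [NormedSpace ℂ E] (x : ℕ → E)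
    (a : ℕ → ℂ) (bound : ∀ p : ℕ →₀ ℂ,
      ‖Finsupp.linearCombination ℂ a p‖ ≤ ‖Finsupp.linearCombination ℂ x p‖) :
    ∃ Λ : StrongDual ℂ E, ∀ k, Λ (x k) = a k := by
  let T : (ℕ →₀ ℂ) →ₗ[ℂ] E := Finsupp.linearCombination ℂ x
  let L : (ℕ →₀ ℂ) →ₗ[ℂ] ℂ := Finsupp.linearCombination ℂ a
  replace bound : ∀ p, ‖L p‖ ≤ ‖T p‖ := bound
  obtain ⟨g, hg⟩ := LinearMap.exists_rightInverse_of_surjective T.rangeRestrict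
    (LinearMap.range_rangeRestrict T)
  have hg' : ∀ y : LinearMap.range T, T (g y) = y := by
    intro y
    have := LinearMap.congr_fun hg y
    exact congrArg Subtype.val this
  let f : StrongDual ℂ (LinearMap.range T) := (L.comp g).mkContinuous 1 (by
    intro y
    have := bound (g y)
    rw [hg'] at this
    simpa using this)
  obtain ⟨Λ, hΛ, -⟩ := exists_extension_norm_eq (LinearMap.range T) f
  refine ⟨Λ, fun k => ?_⟩
  have hk : T (Finsupp.single k 1) = x k := by simp [T]
  have hm : x k ∈ LinearMap.range T := hk ▸ LinearMap.mem_range_self T _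
  have h2 := hΛ ⟨T (Finsupp.single k 1), LinearMap.mem_range_self _ _⟩
  simp only [hk] at h2
  rw [h2]
  have h3 : f ⟨x k, hm⟩ =
      L (g ⟨x k, hm⟩) := rfl
  rw [h3]
  have h4 := bound (g ⟨x k, hm⟩ - Finsupp.single k 1)
  rw [map_sub, map_sub, hg', hk] at h4
  have h5 : L (Finsupp.single k 1) = a k := by simp [L]
  rw [h5] at h4
  simp only [sub_self, norm_zero, norm_le_zero_iff] at h4
  exact sub_eq_zero.1 h4

lemma exists_functional {a : ℕ → ℂ} (h : MomB 1 a) :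
    ∃ Λ : StrongDual ℂ C(unitInterval, ℂ), ∀ k, Λ (idX ^ k) = a k := by
  let T : (ℕ →₀ ℂ) →ₗ[ℂ] C(unitInterval, ℂ) := Finsupp.linearCombination ℂ (fun k => idX ^ k)
  let L : (ℕ →₀ ℂ) →ₗ[ℂ] ℂ := Finsupp.linearCombination ℂ a
  have bound : ∀ p, ‖L p‖ ≤ ‖T p‖ := by
    intro p
    obtain ⟨N, hN⟩ : ∃ N, p.support ⊆ Finset.range N := p.support.exists_nat_subset_range
    have hL : L p = ∑ k ∈ Finset.range N, p k * a k := by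
      simp only [L, Finsupp.linearCombination_apply]
      rw [Finsupp.sum_of_support_subset _ hN _ (by simp)]
      simp
    have hT : T p = ∑ k ∈ Finset.range N, p k • idX ^ k := by
      simp only [T, Finsupp.linearCombination_apply]
      rw [Finsupp.sum_of_support_subset _ hN _ (by simp)]
    have := h N p ‖T p‖ (by
      intro s hs
      have h1 := (T p).norm_coe_le_norm ⟨s, hs⟩
      rw [hT] at h1 ⊢
      simpa [ContinuousMap.sum_apply, idX] using h1)
    rw [hL]; simpa using this
  exact exists_functional_gen _ a bound

lemma isUnit_one_sub {z : ℂ} (hz : ‖z‖ = 1) (hz1 : z ≠ 1) : IsUnit (1 - z • idX) := by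
  rw [ContinuousMap.isUnit_iff_forall_ne_zero]
  intro s hs
  have h1 : z * ((s:ℝ):ℂ) = 1 := by
    have : 1 - z * ((s:ℝ):ℂ) = 0 := hs
    linear_combination -this
  have h2 := congrArg norm h1
  rw [norm_mul, hz, Complex.norm_real, Real.norm_of_nonneg s.2.1, one_mul, norm_one] at h2
  rw [h2] at h1
  exact hz1 (by simpa using h1)

lemma tsum_eq_functional {a : ℕ → ℂ} (Λ : StrongDual ℂ C(unitInterval, ℂ))
    (hΛ : ∀ k, Λ (idX ^ k) = a k) (ha : Summable fun k => ‖a k‖) {z : ℂ} (hz : ‖z‖ = 1)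
    (hz1 : z ≠ 1) : ∑' k, a k * z ^ k = Λ (Ring.inverse (1 - z • idX)) := by
  have inner : ∀ w : ℂ, ‖w‖ < 1 → ∑' k, a k * w ^ k = Λ (Ring.inverse (1 - w • idX)) := by
    intro w hw
    have hn : ‖w • idX‖ < 1 := by
      rw [norm_smul]
      have := norm_idX_le
      nlinarith [norm_nonneg w, norm_nonneg idX]
    rw [NormedRing.inverse_one_sub _ hn]
    have : (↑(Units.oneSub (w • idX) hn)⁻¹ : C(unitInterval, ℂ)) = ∑' n : ℕ, (w • idX) ^ n := rfl
    rw [this, ContinuousLinearMap.map_tsum _ (summable_geometric_of_norm_lt_one hn)]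
    congr 1; funext k
    rw [smul_pow, map_smul, hΛ, smul_eq_mul, mul_comm]
  let w : ℕ → ℂ := fun m => ((1 - 1 / ((m:ℝ) + 1) : ℝ) : ℂ) * z
  have hρ : ∀ m : ℕ, 0 ≤ 1 - 1 / ((m:ℝ) + 1) ∧ 1 - 1 / ((m:ℝ) + 1) < 1 := by
    intro m
    have : 0 < 1 / ((m:ℝ) + 1) := by positivity
    have h2 : 1 / ((m:ℝ) + 1) ≤ 1 := by
      rw [div_le_one (by positivity)]; linarith [(m.cast_nonneg : (0:ℝ) ≤ m)]
    constructor <;> linarith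
  have hw1 : ∀ m, ‖w m‖ < 1 := by
    intro m
    simp only [w]
    rw [norm_mul, hz, mul_one, Complex.norm_real, Real.norm_of_nonneg (hρ m).1]
    exact (hρ m).2
  have hw : Tendsto w atTop (nhds z) := by
    have h1 : Tendsto (fun m : ℕ => (1 - 1 / ((m:ℝ) + 1) : ℝ)) atTop (nhds (1 - 0)) :=
      tendsto_const_nhds.sub tendsto_one_div_add_atTop_nhds_zero_nat
    have h2 := ((Complex.continuous_ofReal.tendsto _).comp h1).mul_const z
    simpa [w] using h2
  have l1 : Tendsto (fun m => ∑' k, a k * w m ^ k) atTop (nhds (∑' k, a k * z ^ k)) := by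
    refine tendsto_tsum_of_dominated_convergence ha (fun k => (hw.pow k).const_mul _) ?_
    refine Eventually.of_forall fun m k => ?_
    rw [norm_mul, norm_pow]
    exact mul_le_of_le_one_right (norm_nonneg _) (pow_le_one₀ (norm_nonneg _) (hw1 m).le)
  have l2 : Tendsto (fun m => Λ (Ring.inverse (1 - w m • idX))) atTop
      (nhds (Λ (Ring.inverse (1 - z • idX)))) := by
    refine (Λ.continuous.tendsto _).comp ?_
    obtain ⟨u, hu⟩ := isUnit_one_sub hz hz1
    have hc : ContinuousAt Ring.inverse (1 - z • idX) := by
      rw [← hu]; exact NormedRing.inverse_continuousAt u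
    refine hc.tendsto.comp ?_
    exact tendsto_const_nhds.sub (hw.smul_const _)
  have : (fun m => ∑' k, a k * w m ^ k) = fun m => Λ (Ring.inverse (1 - w m • idX)) :=
    funext fun m => inner _ (hw1 m)
  rw [this] at l1
  exact tendsto_nhds_unique l1 l2

lemma analytic_aux (Λ : StrongDual ℂ C(unitInterval, ℂ)) (c d : ℂ) {t : ℝ}
    (ht : Complex.exp (t * Complex.I) ≠ 1) :
    AnalyticAt ℝ (fun t : ℝ =>
      (c * (Λ (Ring.inverse (1 - Complex.exp (t * Complex.I) • idX)) - d)).re) t := by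
  have hu := isUnit_one_sub (Complex.norm_exp_ofReal_mul_I t) ht
  have h0 : AnalyticAt ℝ (fun t : ℝ => Complex.exp (t * Complex.I)) t := by
    have h1 : AnalyticAt ℝ (fun t : ℝ => (t : ℂ)) t := Complex.ofRealCLM.analyticAt t
    have h2 : AnalyticAt ℝ Complex.exp (t * Complex.I) :=
      (analyticAt_cexp (z := (t * Complex.I : ℂ))).restrictScalars
    exact AnalyticAt.comp (f := fun t : ℝ => (t * Complex.I : ℂ)) h2 (h1.mul analyticAt_const)
  have h1 : AnalyticAt ℝ (fun t : ℝ => 1 - Complex.exp (t * Complex.I) • idX) t :=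
    analyticAt_const.sub (h0.smul analyticAt_const)
  have h2 : AnalyticAt ℝ (fun t : ℝ => Ring.inverse (1 - Complex.exp (t * Complex.I) • idX)) t := by
    obtain ⟨u, hu⟩ := hu
    have : AnalyticAt ℝ (Ring.inverse : C(unitInterval, ℂ) → _) (1 - Complex.exp (t * Complex.I) • idX) := by
      rw [← hu]; exact analyticAt_inverse u
    exact AnalyticAt.comp (f := fun t : ℝ => 1 - Complex.exp (t * Complex.I) • idX) this h1
  have h3 : AnalyticAt ℝ (fun t : ℝ => Λ (Ring.inverse (1 - Complex.exp (t * Complex.I) • idX))) t :=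
    ((Λ.restrictScalars ℝ).analyticAt _).comp h2
  exact (Complex.reCLM.analyticAt _).comp (analyticAt_const.mul (h3.sub analyticAt_const))

lemma summ_exp {A r : ℝ} (hA : 0 < A) (hr0 : 0 < r) :
    Summable fun k : ℕ => Real.exp (-A * (k:ℝ) ^ r) := by
  have h := (isLittleO_exp_neg_mul_rpow_atTop hA (-2 / r)).comp_tendsto
    ((tendsto_rpow_atTop hr0).comp tendsto_natCast_atTop_atTop)
  refine summable_of_isBigO_nat (g := fun k : ℕ => (k:ℝ) ^ (-2:ℝ)) ?_ ?_
  · rw [Real.summable_nat_rpow]; norm_num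
  · refine h.isBigO.congr_right fun k => ?_
    simp only [Function.comp]
    rw [← Real.rpow_mul k.cast_nonneg]
    congr 1; field_simp

lemma summ_exp_shift {A r : ℝ} (hA : 0 < A) (hr0 : 0 < r) (n : ℕ) :
    Summable fun k : ℕ => Real.exp (-A * ((k:ℝ) + n) ^ r) := by
  have := (summable_nat_add_iff n).2 (summ_exp hA hr0)
  simpa using this

noncomputable def hfun (A r x : ℝ) : ℝ := Real.exp (-A * x ^ r) * x ^ (1 - r) / (A * r)

lemma hfun_deriv {A r x : ℝ} (hA : 0 < A) (hr0 : 0 < r) (hx : 0 < x) :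
    HasDerivAt (hfun A r) (-(Real.exp (-A * x ^ r) * (1 - (1 - r) * x ^ (-r) / (A * r)))) x := by
  have h1 := (((Real.hasDerivAt_rpow_const (x := x) (p := r) (Or.inl hx.ne')).const_mul (-A)).exp.mul
    (Real.hasDerivAt_rpow_const (x := x) (p := 1 - r) (Or.inl hx.ne'))).div_const (A * r)
  refine h1.congr_deriv ?_
  have e1 : x ^ (r - 1) * x ^ (1 - r) = 1 := by
    rw [← Real.rpow_add hx]; simp
  have e2 : (1 - r - 1) = -r := by ring
  rw [e2]
  field_simp
  linear_combination (-A * r) * e1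

lemma hfun_step {A r x u : ℝ} (hA : 0 < A) (hr0 : 0 < r) (hr1 : r < 1) (hx : 0 < x)
    (hu : x ^ (-r) / (A * r) ≤ u) (hu1 : u ≤ 1) :
    hfun A r x - hfun A r (x + 1) ≤ Real.exp (-A * x ^ r) ∧
    (1 - u) * Real.exp (-A * (x + 1) ^ r) ≤ hfun A r x - hfun A r (x + 1) := by
  obtain ⟨c, hc, hc'⟩ := exists_hasDerivAt_eq_slope (hfun A r)
    (fun y => -(Real.exp (-A * y ^ r) * (1 - (1 - r) * y ^ (-r) / (A * r)))) (show x < x + 1 by linarith)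
    (fun y hy => (hfun_deriv hA hr0 (by linarith [hy.1])).continuousAt.continuousWithinAt)
    (fun y hy => hfun_deriv hA hr0 (by linarith [hy.1]))
  have hcpos : 0 < c := by linarith [hc.1]
  have e : hfun A r x - hfun A r (x + 1) =
      Real.exp (-A * c ^ r) * (1 - (1 - r) * c ^ (-r) / (A * r)) := by
    have : x + 1 - x = 1 := by ring
    rw [this, div_one] at hc'
    linarith
  rw [e]
  have m1 : x ^ r ≤ c ^ r := Real.rpow_le_rpow hx.le hc.1.le hr0.le
  have m2 : c ^ r ≤ (x + 1) ^ r := Real.rpow_le_rpow hcpos.le hc.2.le hr0.le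
  have m3 : c ^ (-r) ≤ x ^ (-r) := Real.rpow_le_rpow_of_nonpos hx hc.1.le (by linarith)
  have E1 : Real.exp (-A * c ^ r) ≤ Real.exp (-A * x ^ r) := Real.exp_le_exp.2 (by nlinarith)
  have E2 : Real.exp (-A * (x + 1) ^ r) ≤ Real.exp (-A * c ^ r) := Real.exp_le_exp.2 (by nlinarith)
  have cp : 0 < c ^ (-r) := Real.rpow_pos_of_pos hcpos _
  have d0 : 0 ≤ (1 - r) * c ^ (-r) / (A * r) :=
    div_nonneg (mul_nonneg (by linarith) cp.le) (by positivity)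
  have d1 : (1 - r) * c ^ (-r) / (A * r) ≤ u := by
    refine le_trans ?_ hu
    gcongr
    nlinarith
  have p1 := Real.exp_pos (-A * c ^ r)
  constructor
  · nlinarith
  · calc (1 - u) * Real.exp (-A * (x + 1) ^ r) ≤ (1 - u) * Real.exp (-A * c ^ r) := by
          apply mul_le_mul_of_nonneg_left E2; linarith
      _ ≤ _ := by nlinarith

lemma hfun_tendsto {A r : ℝ} (hA : 0 < A) (hr0 : 0 < r) : Tendsto (hfun A r) atTop (nhds 0) := by
  have h := (tendsto_rpow_mul_exp_neg_mul_atTop_nhds_zero ((1 - r) / r) A hA).comp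
    (tendsto_rpow_atTop hr0)
  have h2 := h.div_const (A * r)
  rw [zero_div] at h2
  refine h2.congr' ?_
  filter_upwards [eventually_gt_atTop 0] with x hx
  simp only [Function.comp, hfun]
  rw [← Real.rpow_mul hx.le, mul_div_cancel₀ _ hr0.ne', mul_comm]

lemma tsum_bounds {A r u : ℝ} (hA : 0 < A) (hr0 : 0 < r) (hr1 : r < 1) {n : ℕ} (hn : 0 < n)
    (hu : (n:ℝ) ^ (-r) / (A * r) ≤ u) (hu1 : u < 1) :
    hfun A r n ≤ ∑' k : ℕ, Real.exp (-A * ((k:ℝ) + n) ^ r) ∧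
    ∑' k : ℕ, Real.exp (-A * ((k:ℝ) + n) ^ r) ≤ hfun A r n / (1 - u) + Real.exp (-A * (n:ℝ) ^ r) := by
  have hs := summ_exp_shift hA hr0 n
  have hn' : (0:ℝ) < n := Nat.cast_pos.2 hn
  have st : ∀ k : ℕ, _ := fun k : ℕ => hfun_step (x := (k:ℝ) + n) (u := u) hA hr0 hr1 (by positivity)
    (le_trans (by
      gcongr ?_ / _
      exact Real.rpow_le_rpow_of_nonpos hn' (by linarith [(k.cast_nonneg : (0:ℝ) ≤ k)]) (by linarith)) hu) hu1.le
  have tel : ∀ N : ℕ, ∑ k ∈ Finset.range N, (hfun A r ((k:ℝ) + n) - hfun A r ((k:ℝ) + n + 1)) =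
      hfun A r n - hfun A r (N + n) := by
    intro N
    have := Finset.sum_range_sub' (fun k : ℕ => hfun A r ((k:ℝ) + n)) N
    simp only [Nat.cast_zero, zero_add] at this
    rw [← this]
    refine Finset.sum_congr rfl fun k _ => ?_
    push_cast
    congr 2; ring
  have hpos : ∀ x : ℝ, 0 < x → 0 ≤ hfun A r x := fun x hx => by unfold hfun; positivity
  constructor
  · have l : Tendsto (fun N : ℕ => hfun A r n - hfun A r (N + n)) atTop (nhds (hfun A r n - 0)) := by
      refine tendsto_const_nhds.sub ((hfun_tendsto hA hr0).comp ?_)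
      exact tendsto_atTop_add_const_right _ _ tendsto_natCast_atTop_atTop
    rw [sub_zero] at l
    refine le_of_tendsto' l fun N => ?_
    rw [← tel]
    exact (Finset.sum_le_sum fun k _ => (st k).1).trans
      (hs.sum_le_tsum _ fun k _ => (Real.exp_pos _).le)
  · rw [hs.tsum_eq_zero_add]
    simp only [Nat.cast_zero, zero_add]
    rw [add_comm]
    gcongr
    refine Real.tsum_le_of_sum_range_le (fun k => (Real.exp_pos _).le) fun N => ?_
    rw [le_div_iff₀ (by linarith), mul_comm, Finset.mul_sum]
    calc _ ≤ ∑ k ∈ Finset.range N, (hfun A r ((k:ℝ) + n) - hfun A r ((k:ℝ) + n + 1)) := by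
          refine Finset.sum_le_sum fun k _ => ?_
          have e : (((k + 1 : ℕ) : ℝ) + n) = (k:ℝ) + n + 1 := by push_cast; ring
          rw [e]
          exact (st k).2
      _ = _ := tel N
      _ ≤ _ := by linarith [hpos (N + n) (by positivity)]

lemma asym {α r : ℝ} (hα : 0 < α) (hr0 : 0 < r) (hr1 : r < 1) {n : ℕ} (hn : 0 < n)
    (h : 1 / (α * r) * (n : ℝ) ^ (-r) + 2 * α * r * (n : ℝ) ^ (-(1 - r)) ≤
      (1 / (3 * π) ^ 3) * (1 / 2)) :
    ∃ γ : ℝ, |γ| ≤ Real.sqrt (54 * π ^ 3 / (54 * π ^ 3 - 1)) ∧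
      Real.sqrt ((∑' k : ℕ, Real.exp (-(2 * α) * ((k:ℝ) + n) ^ r)) / π) =
        Real.exp (-α * (n : ℝ) ^ r) / Real.sqrt (2 * π * α * r) * (n : ℝ) ^ ((1 - r) / 2) *
            (1 + γ * (1 / (2 * α * r) * (n : ℝ) ^ (-r) +
              α * r * (n : ℝ) ^ (-(1 - r)))) := by
  have hn' : (0:ℝ) < n := Nat.cast_pos.2 hn
  have hπ := Real.pi_gt_three
  have hbig : (1 / (3 * π) ^ 3) * (1 / 2) ≤ 1 / 2 := by
    have : (1:ℝ) ≤ (3 * π) ^ 3 := one_le_pow₀ (by linarith)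
    have := (div_le_one (by positivity : (0:ℝ) < (3 * π) ^ 3)).2 this
    linarith
  set p := (n:ℝ) ^ (-r) with hp
  set q := (n:ℝ) ^ (-(1 - r)) with hq
  have pp : 0 < p := Real.rpow_pos_of_pos hn' _
  have qp : 0 < q := Real.rpow_pos_of_pos hn' _
  set u := 1 / (2 * α * r) * p with hu
  set v := α * r * q with hv
  have up : 0 < u := by positivity
  have vp : 0 < v := by positivity
  have huv : 2 * u + 2 * v ≤ 1 / 2 := by
    refine le_trans (le_of_eq ?_) (h.trans hbig)
    rw [hu, hv]; field_simp
  set T := ∑' k : ℕ, Real.exp (-(2 * α) * ((k:ℝ) + n) ^ r) with hT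
  obtain ⟨b1, b2⟩ := tsum_bounds (A := 2 * α) (u := u) (by positivity) hr0 hr1 hn
    (le_of_eq (by rw [hu, ← hp]; field_simp)) (by linarith)
  set M := hfun (2 * α) r n with hM
  have Mp : 0 < M := by rw [hM]; unfold hfun; positivity
  have e0 : Real.exp (-(2 * α) * (n:ℝ) ^ r) = M * (2 * v) := by
    rw [hM, hv, hq]; unfold hfun
    have : (n:ℝ) ^ (1 - r) * (n:ℝ) ^ (-(1 - r)) = 1 := by rw [← Real.rpow_add hn']; simp
    field_simp
    rw [mul_comm] at this
    linear_combination (-1) * this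
  set D := Real.exp (-α * (n : ℝ) ^ r) / Real.sqrt (2 * π * α * r) * (n : ℝ) ^ ((1 - r) / 2) with hD
  have Dp : 0 < D := by rw [hD]; positivity
  have D2 : D ^ 2 = M / π := by
    rw [hD, hM]; unfold hfun
    rw [mul_pow, div_pow, Real.sq_sqrt (by positivity), ← Real.exp_nat_mul, ← Real.rpow_natCast _ 2,
      ← Real.rpow_mul hn'.le]
    rw [show (1 - r) / 2 * ((2:ℕ):ℝ) = 1 - r by push_cast; ring,
      show ((2:ℕ):ℝ) * (-α * (n:ℝ) ^ r) = -(2 * α) * (n:ℝ) ^ r by push_cast; ring]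
    field_simp
  have hTle : T ≤ M * (1 + (u + v)) ^ 2 := by
    have h1 : M / (1 - u) ≤ M * (1 + 2 * u) := by
      rw [div_le_iff₀ (by linarith)]
      nlinarith [mul_pos Mp up]
    rw [e0] at b2
    nlinarith [sq_nonneg (u + v)]
  have s1 : D ≤ Real.sqrt (T / π) := by
    apply Real.le_sqrt_of_sq_le
    rw [D2]; gcongr
  have s2 : Real.sqrt (T / π) ≤ D * (1 + (u + v)) := by
    rw [Real.sqrt_le_left (by positivity), mul_pow, D2]
    rw [div_mul_eq_mul_div]
    gcongr
  refine ⟨(Real.sqrt (T / π) / D - 1) / (u + v), ?_, ?_⟩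
  · have : (1:ℝ) ≤ Real.sqrt (54 * π ^ 3 / (54 * π ^ 3 - 1)) := by
      rw [Real.one_le_sqrt]
      have : (1:ℝ) ≤ π ^ 3 := one_le_pow₀ (by linarith)
      rw [one_le_div (by linarith)]; linarith
    refine le_trans ?_ this
    have t1 : 1 ≤ Real.sqrt (T / π) / D := by rwa [one_le_div Dp]
    have t2 : Real.sqrt (T / π) / D ≤ 1 + (u + v) := by rw [div_le_iff₀ Dp]; linarith
    rw [abs_of_nonneg (div_nonneg (by linarith) (by positivity)), div_le_one (by positivity)]
    linarith
  · have : u + v ≠ 0 := by positivity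
    field_simp
    ring

lemma n0_spec {α r : ℝ} (hα : 0 < α) (hr0 : 0 < r) (hr1 : r < 1) {n : ℕ}
    (hn : sInf {n : ℕ | 0 < n ∧
    1 / (α * r) * (n : ℝ) ^ (-r) + 2 * α * r * (n : ℝ) ^ (-(1 - r)) ≤
      (1 / (3 * π) ^ 3) * (1 / 2)} ≤ n) : 0 < n ∧
    1 / (α * r) * (n : ℝ) ^ (-r) + 2 * α * r * (n : ℝ) ^ (-(1 - r)) ≤
      (1 / (3 * π) ^ 3) * (1 / 2) := by
  have l : Tendsto (fun n : ℕ => 1 / (α * r) * (n : ℝ) ^ (-r) + 2 * α * r * (n : ℝ) ^ (-(1 - r)))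
      atTop (nhds (1 / (α * r) * 0 + 2 * α * r * 0)) :=
    (((tendsto_rpow_neg_atTop hr0).comp tendsto_natCast_atTop_atTop).const_mul _).add
    (((tendsto_rpow_neg_atTop (by linarith : 0 < 1 - r)).comp tendsto_natCast_atTop_atTop).const_mul _)
  have hpos : 1 / (α * r) * 0 + 2 * α * r * 0 < (1 / (3 * π) ^ 3) * (1 / 2) := by
    have := Real.pi_pos
    simp only [mul_zero, add_zero]; positivity
  have ne : {n : ℕ | 0 < n ∧
    1 / (α * r) * (n : ℝ) ^ (-r) + 2 * α * r * (n : ℝ) ^ (-(1 - r)) ≤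
      (1 / (3 * π) ^ 3) * (1 / 2)}.Nonempty := by
    obtain ⟨m, h1, h2⟩ := ((eventually_gt_atTop 0).and (l.eventually_lt_const hpos)).exists
    exact ⟨m, h1, h2.le⟩
  obtain ⟨h1, h2⟩ := Nat.sInf_mem ne
  set m := sInf {n : ℕ | 0 < n ∧
    1 / (α * r) * (n : ℝ) ^ (-r) + 2 * α * r * (n : ℝ) ^ (-(1 - r)) ≤
      (1 / (3 * π) ^ 3) * (1 / 2)}
  refine ⟨by omega, le_trans ?_ h2⟩
  have hm : (0:ℝ) < m := Nat.cast_pos.2 h1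
  have hmn : (m:ℝ) ≤ n := Nat.cast_le.2 hn
  have a1 := Real.rpow_le_rpow_of_nonpos hm hmn (by linarith : -r ≤ 0)
  have a2 := Real.rpow_le_rpow_of_nonpos hm hmn (by linarith : -(1 - r) ≤ 0)
  gcongr

/-- General trigonometric tail. -/
noncomputable def PT (c b : ℕ → ℝ) (n : ℕ) (t : ℝ) : ℝ :=
  ∑' k : ℕ, c (k + n) * Real.cos (((k + n : ℕ) : ℝ) * t - b (k + n))

lemma int_cos_zero (m : ℤ) (hm : m ≠ 0) (d : ℝ) :
    ∫ t in (-π)..π, Real.cos ((m:ℝ) * t - d) = 0 := by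
  have hm' : (m:ℝ) ≠ 0 := Int.cast_ne_zero.2 hm
  rw [intervalIntegral.integral_comp_mul_sub (fun y => Real.cos y) hm' d, integral_cos]
  have : Real.sin ((m:ℝ) * π - d) = Real.sin ((m:ℝ) * (-π) - d) := by
    rw [← Real.sin_add_int_mul_two_pi ((m:ℝ) * (-π) - d) m]
    congr 1; ring
  rw [this]; simp

lemma int_cos_cos (k j : ℕ) (hk : 0 < k) (b d : ℝ) :
    ∫ t in (-π)..π, Real.cos ((k:ℝ) * t - b) * Real.cos ((j:ℝ) * t - d) =
      if k = j then π * Real.cos (b - d) else 0 := by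
  have e : ∀ t : ℝ, Real.cos ((k:ℝ) * t - b) * Real.cos ((j:ℝ) * t - d) =
      (1 / 2) * Real.cos (((k - j : ℤ) : ℝ) * t - (b - d)) +
      (1 / 2) * Real.cos (((k + j : ℤ) : ℝ) * t - (b + d)) := by
    intro t
    have e1 : ((k - j : ℤ) : ℝ) * t - (b - d) = ((k:ℝ) * t - b) - ((j:ℝ) * t - d) := by
      push_cast; ring
    have e2 : ((k + j : ℤ) : ℝ) * t - (b + d) = ((k:ℝ) * t - b) + ((j:ℝ) * t - d) := by
      push_cast; ring
    rw [e1, e2, Real.cos_sub ((k:ℝ) * t - b) ((j:ℝ) * t - d), Real.cos_add ((k:ℝ) * t - b) ((j:ℝ) * t - d)]; ring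
  simp_rw [e]
  rw [intervalIntegral.integral_add (Continuous.intervalIntegrable (by fun_prop) _ _)
    (Continuous.intervalIntegrable (by fun_prop) _ _), intervalIntegral.integral_const_mul,
    intervalIntegral.integral_const_mul, int_cos_zero (k + j) (by omega)]
  split_ifs with h
  · subst h
    have : ∀ t : ℝ, Real.cos (((k - k : ℤ) : ℝ) * t - (b - d)) = Real.cos (b - d) := by
      intro t; rw [← Real.cos_neg]; congr 1; push_cast; ring
    simp_rw [this]
    rw [intervalIntegral.integral_const, smul_eq_mul]; ring
  · rw [int_cos_zero (k - j) (by omega)]; simp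

lemma PT_summable {c : ℕ → ℝ} (hc : Summable fun k => |c k|) (b : ℕ → ℝ) (n : ℕ) (t : ℝ) :
    Summable fun k : ℕ => c (k + n) * Real.cos (((k + n : ℕ) : ℝ) * t - b (k + n)) := by
  refine Summable.of_norm_bounded ((summable_nat_add_iff n).2 hc) fun k => ?_
  rw [norm_mul]
  exact mul_le_of_le_one_right (norm_nonneg _) (Real.abs_cos_le_one _)

lemma PT_continuous {c : ℕ → ℝ} (hc : Summable fun k => |c k|) (b : ℕ → ℝ) (n : ℕ) :
    Continuous (PT c b n) := by
  refine continuous_tsum (fun k => by fun_prop) ((summable_nat_add_iff n).2 hc) fun k t => ?_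
  rw [norm_mul]
  exact mul_le_of_le_one_right (norm_nonneg _) (Real.abs_cos_le_one _)

lemma PT_periodic (c b : ℕ → ℝ) (n : ℕ) (t : ℝ) : PT c b n (t + 2 * π) = PT c b n t := by
  unfold PT
  congr 1; funext k
  congr 1
  rw [← Real.cos_add_nat_mul_two_pi (((k + n : ℕ) : ℝ) * t - b (k + n)) (k + n)]
  congr 1; ring

lemma PT_sub (c b : ℕ → ℝ) (n : ℕ) (x t : ℝ) :
    PT c b n (x - t) = PT c (fun k => k * x - b k) n t := by
  unfold PT
  congr 1; funext k
  congr 1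
  rw [← Real.cos_neg]
  congr 1; ring

lemma PT_split {c : ℕ → ℝ} (hc : Summable fun k => |c k|) (b : ℕ → ℝ) (n : ℕ) (hn : 0 < n) (t : ℝ) :
    PT c b 1 t = ∑ k ∈ Finset.Icc 1 (n - 1), c k * Real.cos ((k:ℝ) * t - b k) + PT c b n t := by
  have h := (PT_summable hc b 1 t).sum_add_tsum_nat_add (n - 1)
  have e : n - 1 + 1 = n := by omega
  unfold PT
  rw [← h]
  congr 1
  · rw [Finset.range_eq_Ico, Finset.sum_Ico_add' (fun k : ℕ => c k * Real.cos ((k:ℝ) * t - b k))]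
    congr 1
  · congr 1; funext k
    rw [add_assoc, e]

lemma PT_int {c : ℕ → ℝ} (hc : Summable fun k => |c k|) (b : ℕ → ℝ) (n : ℕ) {φ : ℝ → ℝ}
    (hφ : IntegrableOn φ (Set.Ioc (-π) π)) :
    HasSum (fun k : ℕ => c (k + n) *
      ∫ t in (-π)..π, Real.cos (((k + n : ℕ) : ℝ) * t - b (k + n)) * φ t)
      (∫ t in (-π)..π, PT c b n t * φ t) := by
  have hle : -π ≤ π := by linarith [Real.pi_pos]
  simp_rw [intervalIntegral.integral_of_le hle]
  have hi : ∀ k : ℕ, Integrable (fun t => Real.cos (((k + n : ℕ) : ℝ) * t - b (k + n)) * φ t)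
      (volume.restrict (Set.Ioc (-π) π)) := by
    intro k
    refine hφ.bdd_mul (c := 1) (Continuous.aestronglyMeasurable (by fun_prop)) ?_
    exact Eventually.of_forall fun t => Real.abs_cos_le_one _
  have := hasSum_integral_of_summable_integral_norm (μ := volume.restrict (Set.Ioc (-π) π))
    (F := fun (k : ℕ) t => c (k + n) * (Real.cos (((k + n : ℕ) : ℝ) * t - b (k + n)) * φ t))
    (fun k => (hi k).const_mul _) (by
      refine Summable.of_nonneg_of_le (fun k => integral_nonneg fun t => norm_nonneg _) (fun k => ?_)
        (((summable_nat_add_iff n).2 hc).mul_right (∫ t in Set.Ioc (-π) π, ‖φ t‖))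
      simp_rw [norm_mul]
      rw [integral_const_mul]
      refine mul_le_mul_of_nonneg_left ?_ (abs_nonneg _)
      refine integral_mono_of_nonneg (Eventually.of_forall fun t => by positivity) hφ.norm ?_
      refine Eventually.of_forall fun t => ?_
      exact mul_le_of_le_one_left (norm_nonneg _) (Real.abs_cos_le_one _))
  simp_rw [integral_const_mul] at this
  have e : (fun t => PT c b n t * φ t) = fun t => ∑' k : ℕ, c (k + n) *
      (Real.cos (((k + n : ℕ) : ℝ) * t - b (k + n)) * φ t) := by
    funext t
    unfold PT
    rw [← tsum_mul_right]
    congr 1; funext k; ring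
  rw [e]
  exact this

lemma PT_int_cos {c : ℕ → ℝ} (hc : Summable fun k => |c k|) (b : ℕ → ℝ) {n : ℕ} (hn : 0 < n)
    (j : ℕ) (d : ℝ) :
    ∫ t in (-π)..π, PT c b n t * Real.cos ((j:ℝ) * t - d) =
      if n ≤ j then c j * (π * Real.cos (b j - d)) else 0 := by
  have h := PT_int hc b n (φ := fun t => Real.cos ((j:ℝ) * t - d))
    (Continuous.integrableOn_Ioc (by fun_prop))
  have e : ∀ k : ℕ, ∫ t in (-π)..π, Real.cos (((k + n : ℕ) : ℝ) * t - b (k + n)) * Real.cos ((j:ℝ) * t - d)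
      = if k + n = j then π * Real.cos (b (k + n) - d) else 0 :=
    fun k => int_cos_cos (k + n) j (by omega) _ _
  simp only [e] at h
  rw [← h.tsum_eq]
  split_ifs with hj
  · rw [tsum_eq_single (j - n)]
    · rw [if_pos (by omega), show j - n + n = j by omega]
    · intro k hk; rw [if_neg (by omega), mul_zero]
  · refine (tsum_congr fun k => ?_).trans (tsum_zero (α := ℝ) (β := ℕ))
    rw [if_neg (by omega), mul_zero]

lemma PT_sq {c : ℕ → ℝ} (hc : Summable fun k => |c k|) (b : ℕ → ℝ) {n : ℕ} (hn : 0 < n) :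
    ∫ t in (-π)..π, PT c b n t ^ 2 = π * ∑' k : ℕ, c (k + n) ^ 2 := by
  have h := PT_int hc b n (φ := PT c b n) ((PT_continuous hc b n).integrableOn_Ioc)
  simp_rw [pow_two]
  rw [← h.tsum_eq, ← tsum_mul_left]
  congr 1; funext k
  have := PT_int_cos hc b hn (k + n) (b (k + n))
  rw [if_pos (by omega)] at this
  simp_rw [mul_comm (Real.cos _)]
  rw [this]; simp; ring

lemma fourierSum_PT {c : ℕ → ℝ} (hc : Summable fun k => |c k|) (b : ℕ → ℝ) (A : ℝ) {n : ℕ} (hn : 0 < n)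
    {f : ℝ → ℝ} (hf : ∀ x, f x = A + PT c b 1 x) (x : ℝ) :
    f x - fourierSum (n - 1) f x = PT c b n x := by
  have hπ : π ≠ 0 := Real.pi_ne_zero
  have gen : ∀ (j : ℕ) (d : ℝ), ∫ t in (-π)..π, f t * Real.cos ((j:ℝ) * t - d) =
      A * (∫ t in (-π)..π, Real.cos ((j:ℝ) * t - d)) +
      if 1 ≤ j then c j * (π * Real.cos (b j - d)) else 0 := by
    intro j d
    rw [← PT_int_cos hc b one_pos j d, ← intervalIntegral.integral_const_mul,
      ← intervalIntegral.integral_add]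
    · congr 1; funext t; rw [hf]; ring
    · exact Continuous.intervalIntegrable (by fun_prop) _ _
    · have := PT_continuous hc b 1
      exact Continuous.intervalIntegrable (by fun_prop) _ _
  have h0 : fourierCoefA f 0 / 2 = A := by
    unfold fourierCoefA
    have := gen 0 0
    simp only [Nat.cast_zero, zero_mul, sub_zero] at this ⊢
    rw [this]
    simp
    field_simp
    ring
  have hA : ∀ j : ℕ, 1 ≤ j → fourierCoefA f j = c j * Real.cos (b j) := by
    intro j hj
    have := gen j 0
    have z := int_cos_zero j (by omega) 0
    rw [Int.cast_natCast] at z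
    rw [z, if_pos hj] at this
    simp only [sub_zero] at this
    unfold fourierCoefA
    rw [this]; field_simp; ring
  have hB : ∀ j : ℕ, 1 ≤ j → fourierCoefB f j = c j * Real.sin (b j) := by
    intro j hj
    have := gen j (π / 2)
    have z := int_cos_zero j (by omega) (π / 2)
    rw [Int.cast_natCast] at z
    rw [z, if_pos hj] at this
    simp only [Real.cos_sub_pi_div_two] at this
    unfold fourierCoefB
    rw [this]; field_simp; ring
  unfold fourierSum
  rw [h0, hf, PT_split hc b n hn x]
  have : ∑ k ∈ Finset.Icc 1 (n - 1), (fourierCoefA f k * Real.cos (k * x) + fourierCoefB f k * Real.sin (k * x))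
      = ∑ k ∈ Finset.Icc 1 (n - 1), c k * Real.cos ((k:ℝ) * x - b k) := by
    refine Finset.sum_congr rfl fun k hk => ?_
    have hk1 := (Finset.mem_Icc.1 hk).1
    rw [hA k hk1, hB k hk1, Real.cos_sub]; ring
  rw [this]; ring

lemma conv_repr {c : ℕ → ℝ} (hc : Summable fun k => |c k|) (b : ℕ → ℝ) {φ : ℝ → ℝ}
    (hφ : IntegrableOn φ (Set.Ioc (-π) π)) :
    ∃ (d θ : ℕ → ℝ), Summable (fun k => |d k|) ∧
      ∀ n x, (1 / π) * ∫ t in (-π)..π, PT c b n (x - t) * φ t = PT d θ n x := by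
  have hle : -π ≤ π := by linarith [Real.pi_pos]
  have hπ := Real.pi_pos
  let z : ℕ → ℂ := fun k => ∫ t in Set.Ioc (-π) π, Complex.exp (((k * t + b k : ℝ) : ℂ) * Complex.I) * (φ t : ℂ)
  have hzb : ∀ k, ‖z k‖ ≤ ∫ t in Set.Ioc (-π) π, ‖φ t‖ := by
    intro k
    refine (norm_integral_le_integral_norm _).trans (le_of_eq ?_)
    congr 1; funext t
    rw [norm_mul, Complex.norm_exp_ofReal_mul_I, one_mul, Complex.norm_real]
  have hzi : ∀ k : ℕ, Integrable (fun t : ℝ => Complex.exp (((k * t + b k : ℝ) : ℂ) * Complex.I) * (φ t : ℂ))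
      (volume.restrict (Set.Ioc (-π) π)) := by
    intro k
    refine Integrable.bdd_mul (c := 1) (hφ.ofReal (𝕜 := ℂ)) (Continuous.aestronglyMeasurable (by fun_prop)) ?_
    exact Eventually.of_forall fun t => (Complex.norm_exp_ofReal_mul_I _).le
  have hm : ∀ (k : ℕ) (x : ℝ), ∫ t in (-π)..π, Real.cos ((k:ℝ) * t - (k * x - b k)) * φ t =
      ‖z k‖ * Real.cos (k * x - (z k).arg) := by
    intro k x
    have e1 : ∀ t : ℝ, Real.cos ((k:ℝ) * t - (k * x - b k)) * φ t =
        (Complex.exp (((-(k * x) : ℝ) : ℂ) * Complex.I) *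
          (Complex.exp (((k * t + b k : ℝ) : ℂ) * Complex.I) * (φ t : ℂ))).re := by
      intro t
      rw [← mul_assoc, ← Complex.exp_add, ← add_mul, ← Complex.ofReal_add, Complex.re_mul_ofReal,
        Complex.exp_ofReal_mul_I_re]
      congr 2; ring
    rw [intervalIntegral.integral_of_le hle]
    simp_rw [e1]
    have e2 := integral_re (𝕜 := ℂ) ((hzi k).const_mul (Complex.exp (((-(k * x) : ℝ) : ℂ) * Complex.I)))
    simp only [RCLike.re_eq_complex_re] at e2
    rw [e2, integral_const_mul]
    change (Complex.exp (((-(k * x) : ℝ) : ℂ) * Complex.I) * z k).re = _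
    conv_lhs => rw [← Complex.norm_mul_exp_arg_mul_I (z k)]
    rw [mul_left_comm, ← Complex.exp_add, ← add_mul, ← Complex.ofReal_add, Complex.re_ofReal_mul,
        Complex.exp_ofReal_mul_I_re, ← Real.cos_neg]
    congr 2; ring
  refine ⟨fun k => c k * ‖z k‖ / π, fun k => (z k).arg, ?_, ?_⟩
  · refine Summable.of_nonneg_of_le (fun k => abs_nonneg _) (fun k => ?_)
      (hc.mul_right ((∫ t in Set.Ioc (-π) π, ‖φ t‖) / π))
    show |c k * ‖z k‖ / π| ≤ _
    rw [mul_div_assoc, abs_mul, abs_of_nonneg (a := ‖z k‖ / π) (by positivity)]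
    have := hzb k
    gcongr
  · intro n x
    simp_rw [PT_sub]
    rw [← (PT_int hc _ n hφ).tsum_eq]
    simp_rw [hm]
    unfold PT
    rw [← tsum_mul_left]
    congr 1; funext k
    ring

lemma coef_summable {α r : ℝ} (hα : 0 < α) (hr0 : 0 < r) :
    Summable fun k : ℕ => |Real.exp (-α * (k:ℝ) ^ r)| := by
  simp_rw [Real.abs_exp]
  simpa using summ_exp_shift hα hr0 0

lemma kernel_eq (α r β t : ℝ) : genPoissonKernel α r β t =
    PT (fun k => Real.exp (-α * (k:ℝ) ^ r)) (fun _ => β * π / 2) 1 t := by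
  unfold genPoissonKernel PT
  congr 1; funext k; push_cast; rfl

lemma kernel_analytic {α r : ℝ} (hα : 0 < α) (hr0 : 0 < r) (hr1 : r < 1) (β : ℝ) :
    AnalyticOnNhd ℝ (genPoissonKernel α r β) (Set.Ioo 0 (2 * π)) := by
  obtain ⟨Λ, hΛ⟩ := exists_functional (momB_main hα hr0 hr1)
  have hs : Summable fun k : ℕ => ‖((Real.exp (-α * (k:ℝ) ^ r) : ℝ) : ℂ)‖ := by
    simpa only [Complex.norm_real, Real.norm_eq_abs] using coef_summable hα hr0
  have hne : ∀ t ∈ Set.Ioo 0 (2 * π), Complex.exp (t * Complex.I) ≠ 1 := by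
    intro t ht h
    obtain ⟨m, hm⟩ := Complex.exp_eq_one_iff.1 h
    have h2 : t = m * (2 * π) := by
      have := congrArg Complex.im hm
      simpa using this
    have hπ := Real.pi_pos
    have l1 : (0:ℝ) < m := by
      by_contra hc
      push Not at hc
      have := ht.1
      nlinarith
    have l2 : (m:ℝ) < 1 := by
      by_contra hc
      push Not at hc
      have := ht.2
      nlinarith
    have l3 : 0 < m := by exact_mod_cast l1
    have l4 : m < 1 := by exact_mod_cast l2
    omega
  have key : ∀ t ∈ Set.Ioo 0 (2 * π), genPoissonKernel α r β t =
      (Complex.exp (((-(β * π / 2) : ℝ) : ℂ) * Complex.I) *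
        (Λ (Ring.inverse (1 - Complex.exp (t * Complex.I) • idX)) -
          ((Real.exp (-α * ((0:ℕ):ℝ) ^ r) : ℝ) : ℂ))).re := by
    intro t ht
    have hz : ‖Complex.exp (t * Complex.I)‖ = 1 := Complex.norm_exp_ofReal_mul_I t
    have hsz : Summable fun k : ℕ => ((Real.exp (-α * (k:ℝ) ^ r) : ℝ) : ℂ) *
        Complex.exp (t * Complex.I) ^ k := by
      refine Summable.of_norm_bounded hs fun k => ?_
      rw [norm_mul, norm_pow, hz, one_pow, mul_one]
    rw [← tsum_eq_functional Λ hΛ hs hz (hne t ht), hsz.tsum_eq_zero_add, pow_zero, mul_one,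
      add_sub_cancel_left, ← tsum_mul_left, kernel_eq]
    have hsz1 := ((summable_nat_add_iff 1).2 hsz).mul_left
      (Complex.exp (((-(β * π / 2) : ℝ) : ℂ) * Complex.I))
    rw [Complex.re_tsum hsz1]
    unfold PT
    congr 1; funext k
    rw [← Complex.exp_nat_mul, mul_left_comm, ← Complex.exp_add, Complex.re_ofReal_mul]
    have : ((-(β * π / 2) : ℝ) : ℂ) * Complex.I + ((k + 1 : ℕ) : ℂ) * (t * Complex.I) =
      ((((k + 1 : ℕ) : ℝ) * t - β * π / 2 : ℝ) : ℂ) * Complex.I := by push_cast; ring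
    rw [this, Complex.exp_ofReal_mul_I_re]
  intro t ht
  refine (analytic_aux Λ (Complex.exp (((-(β * π / 2) : ℝ) : ℂ) * Complex.I))
    ((Real.exp (-α * ((0:ℕ):ℝ) ^ r) : ℝ) : ℂ) (hne t ht)).congr ?_
  filter_upwards [Ioo_mem_nhds ht.1 ht.2] with s hs
  exact (key s hs).symm

lemma two_pi_eq : -π + 2 * π = π := by ring

lemma kernel_zero_null {α r : ℝ} (hα : 0 < α) (hr0 : 0 < r) (hr1 : r < 1) (β : ℝ) :
    volume {t | genPoissonKernel α r β t = 0} = 0 := by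
  have hπ := Real.pi_pos
  have hc := coef_summable hα hr0
  have hK : genPoissonKernel α r β = PT (fun k => Real.exp (-α * (k:ℝ) ^ r)) (fun _ => β * π / 2) 1 := by
    funext t; exact kernel_eq α r β t
  have hper : Function.Periodic (genPoissonKernel α r β) (2 * π) := by
    intro t; rw [hK]; exact PT_periodic _ _ _ _
  have ex : ∃ x ∈ Set.Ioo 0 (2 * π), genPoissonKernel α r β x ≠ 0 := by
    by_contra hcon
    push Not at hcon
    have h1 := PT_sq hc (fun _ => β * π / 2) one_pos
    rw [← hK] at h1
    have hper2 : Function.Periodic (fun t => genPoissonKernel α r β t ^ 2) (2 * π) := by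
      intro t; simp only [hper t]
    have h2 := hper2.intervalIntegral_add_eq (-π) 0
    rw [two_pi_eq, zero_add, h1, intervalIntegral.integral_of_le (by positivity),
      integral_Ioc_eq_integral_Ioo, setIntegral_eq_zero_of_forall_eq_zero
        (fun x hx => by rw [hcon x hx]; simp)] at h2
    have hs : Summable fun k : ℕ => Real.exp (-α * ((k + 1 : ℕ):ℝ) ^ r) ^ 2 := by
      refine (summ_exp_shift (A := 2 * α) (by positivity) hr0 1).congr fun k => ?_
      rw [← Real.exp_nat_mul]; congr 1; push_cast; ring
    have := hs.tsum_pos (fun k => by positivity) 0 (by positivity)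
    have := mul_pos hπ this
    exact this.ne' h2
  obtain ⟨x, hx, hx0⟩ := ex
  have hcod := (kernel_analytic hα hr0 hr1 β).preimage_zero_mem_codiscreteWithin hx0 hx
    (isConnected_Ioo (by positivity))
  have hae := ae_restrict_le_codiscreteWithin (μ := volume) measurableSet_Ioo hcod
  have hae' : volume ({t | genPoissonKernel α r β t = 0} ∩ Set.Ioc 0 (0 + 2 * π)) = 0 := by
    rw [mem_ae_iff, ← Set.preimage_compl, compl_compl, Measure.restrict_apply' measurableSet_Ioo] at hae
    rw [zero_add, measure_congr ((ae_eq_refl _).inter Ioo_ae_eq_Ioc.symm)]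
    exact hae
  refine (isAddFundamentalDomain_Ioc (T := 2 * π) (by positivity) 0).measure_zero_of_invariant _ ?_ hae'
  intro g
  ext t
  rw [Set.mem_vadd_set_iff_neg_vadd_mem]
  simp only [Set.mem_ofPred_eq, hper.map_vadd_zmultiples]

lemma kernel_ae {α r : ℝ} (hα : 0 < α) (hr0 : 0 < r) (hr1 : r < 1) (β x : ℝ) :
    ∀ᵐ t, genPoissonKernel α r β (x - t) ≠ 0 := by
  have h : ∀ᵐ t, genPoissonKernel α r β t ≠ 0 := by
    rw [ae_iff]; simpa using kernel_zero_null hα hr0 hr1 β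
  exact (Measure.measurePreserving_sub_left volume x).quasiMeasurePreserving.ae h

lemma nonmeas {α r : ℝ} (hα : 0 < α) (hr0 : 0 < r) (hr1 : r < 1) (β x : ℝ) {φ : ℝ → ℝ}
    (hφ : ¬ AEStronglyMeasurable φ (volume.restrict (Set.Ioc (-π) π))) :
    ∫ t in (-π)..π, genPoissonKernel α r β (x - t) * φ t = 0 := by
  rw [intervalIntegral.integral_of_le (by linarith [Real.pi_pos])]
  refine integral_undef fun hi => hφ ?_
  have hcont : Continuous fun t => genPoissonKernel α r β (x - t) := by
    have : Continuous (genPoissonKernel α r β) := by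
      have h := PT_continuous (coef_summable hα hr0) (fun _ => β * π / 2) 1
      refine h.congr fun t => (kernel_eq α r β t).symm
    fun_prop
  have h1 : AEStronglyMeasurable (fun t => (genPoissonKernel α r β (x - t))⁻¹)
      (volume.restrict (Set.Ioc (-π) π)) := hcont.measurable.inv.aestronglyMeasurable
  refine (h1.mul hi.aestronglyMeasurable).congr ?_
  filter_upwards [ae_restrict_of_ae (kernel_ae hα hr0 hr1 β x)] with t ht
  simp [ht]

lemma transfer {φ : ℝ → ℝ} (hφ : ∀ x, φ (x + 2 * π) = φ x)
    (hm : AEStronglyMeasurable φ (volume.restrict (Set.Ioc (-π) π)))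
    (h : eLpNorm φ 2 (volume.restrict (Set.Ioc (0 : ℝ) (2 * π))) ≤ 1) :
    IntegrableOn φ (Set.Ioc (-π) π) ∧ IntegrableOn (fun t => φ t ^ 2) (Set.Ioc (-π) π) ∧
      ∫ t in (-π)..π, φ t ^ 2 ≤ 1 := by
  have hπ := Real.pi_pos
  have h2π : (0:ℝ) < 2 * π := by positivity
  have hper : Function.Periodic φ (2 * π) := hφ
  have e : eLpNorm φ 2 (volume.restrict (Set.Ioc (0 : ℝ) (2 * π))) =
      eLpNorm φ 2 (volume.restrict (Set.Ioc (-π) π)) := by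
    rw [eLpNorm_eq_lintegral_rpow_enorm_toReal (by norm_num) (by norm_num),
      eLpNorm_eq_lintegral_rpow_enorm_toReal (by norm_num) (by norm_num)]
    congr 1
    have := (isAddFundamentalDomain_Ioc h2π 0).setLIntegral_eq (isAddFundamentalDomain_Ioc h2π (-π))
      (fun t => ‖φ t‖ₑ ^ (2:ℝ≥0∞).toReal) (fun g t => by rw [hper.map_vadd_zmultiples])
    rwa [zero_add, two_pi_eq] at this
  rw [e] at h
  have hL : MemLp φ 2 (volume.restrict (Set.Ioc (-π) π)) := ⟨hm, h.trans_lt ENNReal.one_lt_top⟩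
  refine ⟨hL.integrable (by norm_num), hL.integrable_sq, ?_⟩
  rw [intervalIntegral.integral_of_le (by linarith)]
  rw [hL.eLpNorm_eq_integral_rpow_norm (by norm_num) (by norm_num)] at h
  simp only [ENNReal.toReal_ofNat, Real.rpow_ofNat, Real.norm_eq_abs, sq_abs] at h
  rw [ENNReal.ofReal_le_one] at h
  by_contra hc
  push Not at hc
  exact absurd h (not_le.2 (Real.one_lt_rpow hc (by norm_num)))

lemma cauchy_bound {P φ : ℝ → ℝ} {V : ℝ} (hV : 0 < V) (hP : Continuous P)
    (hPV : ∫ t in (-π)..π, P t ^ 2 = V)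
    (h2 : IntegrableOn (fun t => φ t ^ 2) (Set.Ioc (-π) π))
    (h3 : ∫ t in (-π)..π, φ t ^ 2 ≤ 1) :
    |∫ t in (-π)..π, P t * φ t| ≤ Real.sqrt V := by
  have hπ := Real.pi_pos
  have hS : 0 < Real.sqrt V := Real.sqrt_pos.2 hV
  have hSS : Real.sqrt V * Real.sqrt V = V := Real.mul_self_sqrt hV.le
  set S := Real.sqrt V
  rw [intervalIntegral.integral_of_le (by linarith)] at *
  have hP2 : IntegrableOn (fun t => P t ^ 2) (Set.Ioc (-π) π) :=
    Continuous.integrableOn_Ioc (by fun_prop)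
  have hb : ∫ t in Set.Ioc (-π) π, (P t ^ 2 * (1 / (2 * S)) + φ t ^ 2 * (S / 2)) =
      V * (1 / (2 * S)) + (∫ t in Set.Ioc (-π) π, φ t ^ 2) * (S / 2) := by
    rw [integral_add (hP2.mul_const _) (h2.mul_const _), integral_mul_const, integral_mul_const, hPV]
  have : |∫ t in Set.Ioc (-π) π, P t * φ t| ≤
      ∫ t in Set.Ioc (-π) π, (P t ^ 2 * (1 / (2 * S)) + φ t ^ 2 * (S / 2)) := by
    refine norm_integral_le_of_norm_le (f := fun t => P t * φ t) ((hP2.mul_const _).add (h2.mul_const _))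
      (Eventually.of_forall fun t => ?_)
    rw [Real.norm_eq_abs, abs_le]
    have e1 : P t ^ 2 * (1 / (2 * S)) + φ t ^ 2 * (S / 2) - P t * φ t = (P t - S * φ t) ^ 2 / (2 * S) := by
      field_simp; ring
    have e2 : P t ^ 2 * (1 / (2 * S)) + φ t ^ 2 * (S / 2) + P t * φ t = (P t + S * φ t) ^ 2 / (2 * S) := by
      field_simp; ring
    have p1 : 0 ≤ (P t - S * φ t) ^ 2 / (2 * S) := by positivity
    have p2 : 0 ≤ (P t + S * φ t) ^ 2 / (2 * S) := by positivity
    constructor <;> linarith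
  refine this.trans ?_
  rw [hb]
  have e : V * (1 / (2 * S)) = S / 2 := by rw [← hSS]; field_simp
  rw [e]
  nlinarith

lemma tail_eq {α r : ℝ} (n : ℕ) : ∑' k : ℕ, Real.exp (-α * ((k + n : ℕ):ℝ) ^ r) ^ 2 =
    ∑' k : ℕ, Real.exp (-(2 * α) * ((k:ℝ) + n) ^ r) := by
  congr 1; funext k
  rw [← Real.exp_nat_mul]; congr 1; push_cast; ring

lemma tail_pos {α r : ℝ} (hα : 0 < α) (hr0 : 0 < r) (n : ℕ) :
    0 < ∑' k : ℕ, Real.exp (-(2 * α) * ((k:ℝ) + n) ^ r) :=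
  (summ_exp_shift (A := 2 * α) (by positivity) hr0 n).tsum_pos (fun k => by positivity) 0
    (by positivity)

lemma sqrt_aux {T : ℝ} (hT : 0 < T) : (1 / π) * Real.sqrt (π * T) = Real.sqrt (T / π) := by
  have hπ := Real.pi_pos
  symm
  rw [Real.sqrt_eq_iff_mul_self_eq (by positivity) (by positivity)]
  have := Real.mul_self_sqrt (show 0 ≤ π * T by positivity)
  have e : (1 / π) * Real.sqrt (π * T) * ((1 / π) * Real.sqrt (π * T)) =
    (1 / π) ^ 2 * (Real.sqrt (π * T) * Real.sqrt (π * T)) := by ring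
  rw [e, this]; field_simp

lemma PTn_sq {α r : ℝ} (hα : 0 < α) (hr0 : 0 < r) (b : ℕ → ℝ) {n : ℕ} (hn : 0 < n) :
    ∫ t in (-π)..π, PT (fun k => Real.exp (-α * (k:ℝ) ^ r)) b n t ^ 2 =
      π * ∑' k : ℕ, Real.exp (-(2 * α) * ((k:ℝ) + n) ^ r) := by
  rw [PT_sq (coef_summable hα hr0) b hn, tail_eq]

/-- The deviation as a convolution. -/
lemma deviation {α r : ℝ} (hα : 0 < α) (hr0 : 0 < r) (β : ℝ) {n : ℕ} (hn : 0 < n)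
    {f φ : ℝ → ℝ} {A : ℝ} (hφ : IntegrableOn φ (Set.Ioc (-π) π))
    (hf : ∀ x, f x = A + (1 / π) * ∫ t in (-π)..π, genPoissonKernel α r β (x - t) * φ t) (x : ℝ) :
    f x - fourierSum (n - 1) f x = (1 / π) * ∫ t in (-π)..π,
      PT (fun k => Real.exp (-α * (k:ℝ) ^ r)) (fun _ => β * π / 2) n (x - t) * φ t := by
  obtain ⟨d, θ, hd, hdθ⟩ := conv_repr (coef_summable hα hr0) (fun _ => β * π / 2) hφ
  rw [hdθ]
  refine fourierSum_PT hd θ A hn (fun x => ?_) x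
  rw [hf, ← hdθ]
  simp_rw [kernel_eq]

lemma upper {α r : ℝ} (hα : 0 < α) (hr0 : 0 < r) (hr1 : r < 1) (β : ℝ) {n : ℕ} (hn : 0 < n)
    {f : ℝ → ℝ} (hf : f ∈ poissonClass α r β 2) (x : ℝ) :
    |f x - fourierSum (n - 1) f x| ≤
      Real.sqrt ((∑' k : ℕ, Real.exp (-(2 * α) * ((k:ℝ) + n) ^ r)) / π) := by
  have hπ := Real.pi_pos
  obtain ⟨-, a₀, φ, hper, hnorm, -, hrep⟩ := hf
  by_cases hm : AEStronglyMeasurable φ (volume.restrict (Set.Ioc (-π) π))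
  · obtain ⟨h1, h2, h3⟩ := transfer hper hm hnorm
    have hT := tail_pos hα hr0 n
    rw [deviation hα hr0 β hn h1 hrep, ← sqrt_aux hT, abs_mul, abs_of_pos (by positivity)]
    refine mul_le_mul_of_nonneg_left ?_ (by positivity)
    simp_rw [PT_sub]
    exact cauchy_bound (by positivity) (PT_continuous (coef_summable hα hr0) _ n)
      (PTn_sq hα hr0 _ hn) h2 h3
  · have hz : ∀ x, f x = a₀ / 2 + PT 0 0 1 x := by
      intro x
      rw [hrep, nonmeas hα hr0 hr1 β x hm]
      simp [PT]
    have := fourierSum_PT (c := 0) (by simpa using summable_zero) 0 (a₀ / 2) hn hz x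
    rw [this]
    simp [PT]

lemma lower {α r : ℝ} (hα : 0 < α) (hr0 : 0 < r) (β : ℝ) {n : ℕ} (hn : 0 < n) :
    ∃ f ∈ poissonClass α r β 2, |f 0 - fourierSum (n - 1) f 0| =
      Real.sqrt ((∑' k : ℕ, Real.exp (-(2 * α) * ((k:ℝ) + n) ^ r)) / π) := by
  have hπ := Real.pi_pos
  have hT := tail_pos hα hr0 n
  set T := ∑' k : ℕ, Real.exp (-(2 * α) * ((k:ℝ) + n) ^ r) with hTdef
  have hS : 0 < Real.sqrt (π * T) := Real.sqrt_pos.2 (by positivity)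
  have hSS : Real.sqrt (π * T) ^ 2 = π * T := Real.sq_sqrt (by positivity)
  set S := Real.sqrt (π * T) with hSdef
  have hc := coef_summable hα hr0
  let P : ℝ → ℝ := PT (fun k => Real.exp (-α * (k:ℝ) ^ r)) (fun k => k * 0 - (fun _ => β * π / 2) k) n
  have hP : ∀ t, PT (fun k => Real.exp (-α * (k:ℝ) ^ r)) (fun _ => β * π / 2) n (0 - t) = P t :=
    fun t => PT_sub _ _ _ _ _
  have hPc : Continuous P := PT_continuous hc _ n
  have hPper : Function.Periodic P (2 * π) := fun t => PT_periodic _ _ _ t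
  have hPsq : ∫ t in (-π)..π, P t ^ 2 = π * T := PTn_sq hα hr0 _ hn
  let φ : ℝ → ℝ := fun t => P t / S
  have hφc : Continuous φ := hPc.div_const S
  have hφper : ∀ t, φ (t + 2 * π) = φ t := fun t => by simp only [φ]; rw [hPper t]
  have hφsq : ∫ t in (0:ℝ)..(2 * π), φ t ^ 2 = 1 := by
    have hper2 : Function.Periodic (fun t => φ t ^ 2) (2 * π) := by
      intro t; simp only [hφper t]
    have h2 := hper2.intervalIntegral_add_eq 0 (-π)
    rw [two_pi_eq, zero_add] at h2
    rw [h2]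
    simp only [φ, div_pow]
    rw [intervalIntegral.integral_div, hPsq, hSS, div_self (by positivity)]
  have hφmean : ∫ t in (0:ℝ)..(2 * π), φ t = 0 := by
    have hper2 : Function.Periodic φ (2 * π) := hφper
    have h2 := hper2.intervalIntegral_add_eq 0 (-π)
    rw [two_pi_eq, zero_add] at h2
    rw [h2]
    simp only [φ]
    rw [intervalIntegral.integral_div]
    have := PT_int_cos hc (fun k => k * 0 - (fun _ => β * π / 2) k) hn 0 0
    rw [if_neg (by omega)] at this
    simp only [Nat.cast_zero, zero_mul, sub_zero, Real.cos_zero, mul_one] at this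
    change (∫ t in (-π)..π, P t) = 0 at this
    rw [this, zero_div]
  have hL : MemLp φ 2 (volume.restrict (Set.Ioc (0 : ℝ) (2 * π))) := by
    rw [memLp_two_iff_integrable_sq hφc.aestronglyMeasurable]
    exact Continuous.integrableOn_Ioc (by fun_prop)
  have hφi : IntegrableOn φ (Set.Ioc (-π) π) := hφc.integrableOn_Ioc
  refine ⟨fun x => 0 / 2 + (1 / π) * ∫ t in (-π)..π, genPoissonKernel α r β (x - t) * φ t,
    ⟨?_, 0, φ, hφper, ?_, hφmean, fun x => rfl⟩, ?_⟩
  · intro x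
    have : ∀ t, genPoissonKernel α r β (x + 2 * π - t) = genPoissonKernel α r β (x - t) := by
      intro t
      rw [kernel_eq, kernel_eq, show x + 2 * π - t = x - t + 2 * π by ring, PT_periodic]
    simp only [this]
  · rw [hL.eLpNorm_eq_integral_rpow_norm (by norm_num) (by norm_num)]
    simp only [ENNReal.toReal_ofNat, Real.rpow_ofNat, Real.norm_eq_abs, sq_abs]
    rw [intervalIntegral.integral_of_le (by positivity)] at hφsq
    rw [hφsq]; simp
  · rw [deviation hα hr0 β hn hφi (fun x => rfl) 0]
    simp only [hP]
    have : ∀ t, P t * φ t = P t ^ 2 / S := fun t => by simp only [φ]; ring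
    simp only [this]
    rw [intervalIntegral.integral_div, hPsq, ← hSS, ← sqrt_aux hT, ← hSdef, pow_two,
      mul_div_cancel_right₀ _ hS.ne', abs_of_pos (by positivity)]

lemma EnC_eq {α r : ℝ} (hα : 0 < α) (hr0 : 0 < r) (hr1 : r < 1) (β : ℝ) {n : ℕ} (hn : 0 < n) :
    EnC α r β 2 n =
      Real.sqrt ((∑' k : ℕ, Real.exp (-(2 * α) * ((k:ℝ) + n) ^ r)) / π) := by
  set B := Real.sqrt ((∑' k : ℕ, Real.exp (-(2 * α) * ((k:ℝ) + n) ^ r)) / π) with hB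
  have hB0 : 0 ≤ B := Real.sqrt_nonneg _
  have u1 : ∀ f, (⨆ (_ : f ∈ poissonClass α r β 2), ⨆ x : ℝ, |f x - fourierSum (n - 1) f x|) ≤ B :=
    fun f => Real.iSup_le (fun hf => Real.iSup_le (fun x => upper hα hr0 hr1 β hn hf x) hB0) hB0
  unfold EnC
  refine le_antisymm (Real.iSup_le u1 hB0) ?_
  obtain ⟨f, hf, hfe⟩ := lower hα hr0 β hn
  have b1 : BddAbove (Set.range fun f : ℝ → ℝ =>
      ⨆ (_ : f ∈ poissonClass α r β 2), ⨆ x : ℝ, |f x - fourierSum (n - 1) f x|) :=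
    ⟨B, by rintro _ ⟨g, rfl⟩; exact u1 g⟩
  have b2 : BddAbove (Set.range fun x : ℝ => |f x - fourierSum (n - 1) f x|) :=
    ⟨B, by rintro _ ⟨x, rfl⟩; exact upper hα hr0 hr1 β hn hf x⟩
  refine le_trans ?_ (le_ciSup b1 f)
  rw [ciSup_pos hf]
  refine le_trans ?_ (le_ciSup b2 0)
  exact hfe.ge

theorem statement4 (α r β : ℝ)
    (hr0 : 0 < r) (hr1 : r < 1) (hα : 0 < α) :
    ∀ n : ℕ, n₀two α r ≤ n →
      ∃ γ : ℝ, |γ| ≤ Real.sqrt (54 * π ^ 3 / (54 * π ^ 3 - 1)) ∧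
        EnC α r β 2 n =
          Real.exp (-α * (n : ℝ) ^ r) / Real.sqrt (2 * π * α * r) * (n : ℝ) ^ ((1 - r) / 2) *
            (1 + γ * (1 / (2 * α * r) * (n : ℝ) ^ (-r) +
              α * r * (n : ℝ) ^ (-(1 - r)))) := by
  intro n hn
  obtain ⟨hn0, h⟩ := n0_spec hα hr0 hr1 hn
  rw [EnC_eq hα hr0 hr1 β hn0]
  exact asym hα hr0 hr1 hn0 h
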